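/- Assume gcd(n, q(q−1)) = 1 and let Tr : F_Q → F_q denote the trace map Tr(x) = Σ_{i=0}^{n−1} x^{q^i}. Then for α ∈ F_Q^×, α is 1-normal for F_Q/F_q if and only if Tr(α) = 0 and the n−1 elements α, α^q, …, α^{q^{n−2}} are linearly independent over F_q. -/

import Mathlib

/-!
Write `φ` for the `q`-Frobenius and let `f ∈ F_q[X]` act on `F_Q` through `f(φ)`. Modulo `Xⁿ - 1`,
multiplying `g_α` by `X` gives `g_{φ α}`, so `f · g_α ≡ g_{f(φ)α}` for every `f ∈ F_q[X]`
(`gpoly_mul_dvd`). As `g_β` has degree `< n`, this yields `f(φ)α = 0 ↔ Xⁿ - 1 ∣ f · g_α`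
(`action_eq_zero_iff`).

The Frobenius applied to the coefficients of `g_α` gives `g_{φ α} ≡ X g_α`, and `X` is a unit modulo
`Xⁿ - 1`. The monic gcd `D` of `g_α` and `Xⁿ - 1` is therefore Frobenius-invariant, so it lies
in `F_q[X]`, and so does `E = (Xⁿ - 1) / D`. Hence `f(φ)α = 0 ↔ E ∣ f` for `f ∈ F_q[X]`
(`exists_factorization`), with `deg D = k` exactly when `α` is `k`-normal.

If `deg D = 1`, then `D = X - c` with `c ∈ F_q` and `cⁿ = 1`; since `n` is prime to `q - 1`, `c = 1`.
So `E = 1 + X + ⋯ + X^{n-1}`, which says that `Tr α = 0` and that there is no linear relation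
among the first `n - 1` conjugates. Conversely `Tr α = 0` gives `E ∣ 1 + X + ⋯ + X^{n-1}`, hence
`deg E ≤ n - 1`, and the independence gives `deg E ≥ n - 1`.
-/

open Polynomial

/-- Evaluation of the `q`-linearized polynomial associated to `f`:
if `f = Σ aᵢ Xⁱ` then `lineval q f α = Σ aᵢ α^(q^i)` (i.e. `f(φ_q)(α)`). -/
noncomputable def lineval {Fq FQ : Type*} [CommSemiring Fq] [CommSemiring FQ] [Algebra Fq FQ]
    (q : ℕ) (f : Polynomial Fq) (α : FQ) : FQ :=
  f.sum fun i a => algebraMap Fq FQ a * α ^ q ^ i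

/-- `g_α(X) = Σ_{i=0}^{n-1} α^(q^i) X^(n-1-i) ∈ F_Q[X]`. -/
noncomputable def gpoly {FQ : Type*} [CommSemiring FQ] (q n : ℕ) (α : FQ) : Polynomial FQ :=
  ∑ i ∈ Finset.range n, Polynomial.C (α ^ q ^ i) * Polynomial.X ^ (n - 1 - i)

/-- `α` is `k`-normal for `F_Q/F_q`: `deg gcd(g_α(X), Xⁿ - 1) = k` in `F_Q[X]`. -/
def IsKNormal {FQ : Type*} [Field FQ] (q n k : ℕ) (α : FQ) : Prop :=
  letI := Classical.decEq (Polynomial FQ)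
  (EuclideanDomain.gcd (gpoly q n α) (Polynomial.X ^ n - 1)).natDegree = k

/-- `m` is the conventional minimal polynomial of `α`: the monic generator of the ideal
`{f ∈ F_q[X] : f(φ_q)(α) = 0}`. -/
def IsMinPoly {Fq FQ : Type*} [CommSemiring Fq] [CommSemiring FQ] [Algebra Fq FQ]
    (q : ℕ) (α : FQ) (m : Polynomial Fq) : Prop :=
  m.Monic ∧ lineval q m α = 0 ∧ ∀ g : Polynomial Fq, lineval q g α = 0 → m ∣ g

/-! ### The polynomial `g_α` -/

section Gpoly

variable {FQ : Type*} [Field FQ]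

theorem gpoly_shift (q n : ℕ) (α : FQ) (h : α ^ q ^ n = α) :
    X * gpoly q n α = gpoly q n (α ^ q) + C α * (X ^ n - 1) := by
  -- Both `X * g_α + α^(q^n)` and `g_{α^q} + α Xⁿ` are `∑_{i ≤ n} α^(q^i) X^(n-i)`.
  have h1 : X * gpoly q n α + C (α ^ q ^ n)
      = ∑ i ∈ Finset.range (n + 1), C (α ^ q ^ i) * X ^ (n - i) := by
    rw [Finset.sum_range_succ, gpoly, Finset.mul_sum]
    congr 1
    · refine Finset.sum_congr rfl fun i hi => ?_
      have hi := Finset.mem_range.mp hi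
      have : n - i = (n - 1 - i) + 1 := by omega
      rw [this, pow_succ]
      ring
    · simp
  have h2 : gpoly q n (α ^ q) + C α * X ^ n
      = ∑ i ∈ Finset.range (n + 1), C (α ^ q ^ i) * X ^ (n - i) := by
    rw [Finset.sum_range_succ', gpoly]
    congr 1
    · refine Finset.sum_congr rfl fun i hi => ?_
      have : n - (i + 1) = n - 1 - i := by omega
      rw [this, ← pow_mul, pow_succ']
    · simp
  rw [h] at h1
  linear_combination h1 - h2

theorem gpoly_coeff_top (q n : ℕ) (hn : 0 < n) (α : FQ) : (gpoly q n α).coeff (n - 1) = α := by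
  rw [gpoly, finsetSum_coeff, Finset.sum_eq_single 0]
  · simp
  · intro i hi h0
    have hi := Finset.mem_range.mp hi
    rw [coeff_C_mul, coeff_X_pow, if_neg (by omega), mul_zero]
  · intro h
    exact absurd (Finset.mem_range.mpr hn) h

theorem gpoly_degree_lt (q n : ℕ) (hn : 0 < n) (α : FQ) : (gpoly q n α).degree < n := by
  refine (degree_sum_le _ _).trans_lt ((Finset.sup_lt_iff (WithBot.bot_lt_coe n)).mpr ?_)
  intro i _
  refine (degree_C_mul_X_pow_le _ _).trans_lt ?_
  exact Nat.cast_lt.mpr (by omega)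

end Gpoly

/-! ### The action of `F_q[X]` through the Frobenius -/

section Action

variable {Fq FQ : Type*} [Field Fq] [Fintype Fq] [Field FQ] [Algebra Fq FQ]

/-- The action `α ↦ f(φ)α` of `f ∈ F_q[X]`, where `φ` is the `q`-Frobenius of `F_Q / F_q`. -/
noncomputable def frobAct (f : Polynomial Fq) (α : FQ) : FQ :=
  aeval (FiniteField.frobeniusAlgHom Fq FQ).toLinearMap f α

theorem frob_pow_apply (i : ℕ) (α : FQ) :
    ((FiniteField.frobeniusAlgHom Fq FQ).toLinearMap ^ i) α = α ^ Fintype.card Fq ^ i := by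
  induction i with
  | zero => simp
  | succ i ih =>
    rw [pow_succ', Module.End.mul_apply, ih, pow_succ, pow_mul]
    rfl

theorem frobAct_C_mul_X_pow (a : Fq) (i : ℕ) (α : FQ) :
    frobAct (C a * X ^ i) α = a • α ^ Fintype.card Fq ^ i := by
  simp [frobAct, frob_pow_apply, Module.algebraMap_end_apply]

theorem frobAct_add (f g : Polynomial Fq) (α : FQ) :
    frobAct (f + g) α = frobAct f α + frobAct g α := by
  simp [frobAct]

theorem frobAct_sum {ι : Type*} (s : Finset ι) (f : ι → Polynomial Fq) (α : FQ) :
    frobAct (∑ i ∈ s, f i) α = ∑ i ∈ s, frobAct (f i) α := by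
  simp [frobAct]

theorem add_pow_card (i : ℕ) (x y : FQ) :
    (x + y) ^ Fintype.card Fq ^ i = x ^ Fintype.card Fq ^ i + y ^ Fintype.card Fq ^ i := by
  simp only [← frob_pow_apply (Fq := Fq), map_add]

theorem gpoly_add (n : ℕ) (x y : FQ) :
    gpoly (Fintype.card Fq) n (x + y)
      = gpoly (Fintype.card Fq) n x + gpoly (Fintype.card Fq) n y := by
  simp only [gpoly, add_pow_card (Fq := Fq), C_add, add_mul, Finset.sum_add_distrib]

theorem gpoly_smul (n : ℕ) (a : Fq) (x : FQ) :
    gpoly (Fintype.card Fq) n (a • x)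
      = C (algebraMap Fq FQ a) * gpoly (Fintype.card Fq) n x := by
  simp only [gpoly, Finset.mul_sum]
  refine Finset.sum_congr rfl fun i _ => ?_
  rw [← frob_pow_apply (Fq := Fq), map_smul, frob_pow_apply, Algebra.smul_def, C_mul, mul_assoc]

theorem map_frob_gpoly (n : ℕ) (α : FQ) :
    (gpoly (Fintype.card Fq) n α).map (FiniteField.frobeniusAlgHom Fq FQ : FQ →+* FQ)
      = gpoly (Fintype.card Fq) n (α ^ Fintype.card Fq) := by
  simp only [gpoly, Polynomial.map_sum, Polynomial.map_mul, Polynomial.map_pow, map_C, map_X]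
  refine Finset.sum_congr rfl fun i _ => ?_
  have : (FiniteField.frobeniusAlgHom Fq FQ : FQ →+* FQ) (α ^ Fintype.card Fq ^ i)
      = (α ^ Fintype.card Fq ^ i) ^ Fintype.card Fq := rfl
  rw [this, ← pow_mul, ← pow_mul, ← pow_succ, ← pow_succ']

theorem frobAct_geom (n : ℕ) (α : FQ) :
    frobAct (∑ i ∈ Finset.range n, X ^ i : Polynomial Fq) α
      = ∑ i ∈ Finset.range n, α ^ Fintype.card Fq ^ i := by
  rw [frobAct_sum]
  refine Finset.sum_congr rfl fun i _ => ?_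
  simpa using frobAct_C_mul_X_pow (1 : Fq) i α

variable [Fintype FQ]

/-- `f · g_α ≡ g_{f(φ)α}` modulo `Xⁿ - 1`. -/
theorem gpoly_mul_dvd (n : ℕ) (hQ : Fintype.card FQ = Fintype.card Fq ^ n)
    (f : Polynomial Fq) (α : FQ) :
    (X ^ n - 1 : Polynomial FQ) ∣
      f.map (algebraMap Fq FQ) * gpoly (Fintype.card Fq) n α
        - gpoly (Fintype.card Fq) n (frobAct f α) := by
  have hfix (x : FQ) : x ^ Fintype.card Fq ^ n = x := by rw [← hQ, FiniteField.pow_card]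
  have hX (i : ℕ) : (X ^ n - 1 : Polynomial FQ) ∣ X ^ i * gpoly (Fintype.card Fq) n α
      - gpoly (Fintype.card Fq) n (α ^ Fintype.card Fq ^ i) := by
    induction i with
    | zero => simp
    | succ i ih =>
      obtain ⟨c, hc⟩ := ih
      have h := gpoly_shift (Fintype.card Fq) n (α ^ Fintype.card Fq ^ i) (hfix _)
      rw [← pow_mul, ← pow_succ] at h
      exact ⟨X * c + C (α ^ Fintype.card Fq ^ i), by linear_combination X * hc + h⟩
  induction f using Polynomial.induction_on' with
  | add f g hf hg =>
    rw [Polynomial.map_add, frobAct_add, gpoly_add]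
    convert! dvd_add hf hg using 1
    ring
  | monomial i a =>
    rw [← C_mul_X_pow_eq_monomial, frobAct_C_mul_X_pow, gpoly_smul]
    convert! (hX i).mul_left (C (algebraMap Fq FQ a)) using 1
    simp
    ring

theorem action_eq_zero_iff (n : ℕ) (hn : 0 < n) (hQ : Fintype.card FQ = Fintype.card Fq ^ n)
    (f : Polynomial Fq) (α : FQ) :
    frobAct f α = 0 ↔ (X ^ n - 1 : Polynomial FQ) ∣
      f.map (algebraMap Fq FQ) * gpoly (Fintype.card Fq) n α := by
  have h := gpoly_mul_dvd n hQ f α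
  have h0 : frobAct f α = 0 ↔ gpoly (Fintype.card Fq) n (frobAct f α) = 0 := by
    constructor
    · intro h
      simp [h, gpoly, Fintype.card_ne_zero]
    · intro h
      rw [← gpoly_coeff_top (Fintype.card Fq) n hn (frobAct f α), h, coeff_zero]
  rw [h0]
  constructor
  · intro h1
    simpa [h1] using h
  · intro h1
    have h2 := (dvd_sub_right h1).mp h
    refine eq_zero_of_dvd_of_degree_lt h2 ?_
    rw [← C_1, degree_X_pow_sub_C hn]
    exact gpoly_degree_lt _ n hn _

/-! ### Descent of the gcd to `F_q[X]` -/

theorem mem_range_of_pow_card_eq {x : FQ} (hx : x ^ Fintype.card Fq = x) :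
    x ∈ Set.range (algebraMap Fq FQ) := by
  refine (IsGalois.mem_range_algebraMap_iff_fixed x).mpr fun σ => ?_
  obtain ⟨k, hk⟩ := (FiniteField.bijective_frobeniusAlgHom_pow Fq FQ).2 (σ : FQ →ₐ[Fq] FQ)
  have h : σ x = (FiniteField.frobeniusAlgHom Fq FQ ^ k.1) x := (DFunLike.congr_fun hk x).symm
  rw [h, AlgHom.coe_pow]
  exact Function.iterate_fixed hx _

/-- The monic gcd of `g_α` and `Xⁿ - 1` and its cofactor in `Xⁿ - 1` are defined over `F_q`, and
the cofactor `E` generates the annihilator of `α` in `F_q[X]`. -/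
theorem exists_factorization (n : ℕ) (hn : 0 < n)
    (hQ : Fintype.card FQ = Fintype.card Fq ^ n) (α : FQ) :
    ∃ D E : Polynomial Fq, D.Monic ∧ D * E = X ^ n - 1 ∧
      (∀ k, IsKNormal (Fintype.card Fq) n k α ↔ D.natDegree = k) ∧
      ∀ f : Polynomial Fq, frobAct f α = 0 ↔ E ∣ f := by
  classical
  set g := gpoly (Fintype.card Fq) n α with hg
  have hP : (X ^ n - 1 : Polynomial FQ) ≠ 0 := (monic_X_pow_sub_C 1 hn.ne').ne_zero
  obtain ⟨G, hG⟩ : ∃ G, G = @EuclideanDomain.gcd (Polynomial FQ) _ (Classical.decEq _) g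
    (X ^ n - 1) := ⟨_, rfl⟩
  have hG1 : G ∣ g := hG ▸ @EuclideanDomain.gcd_dvd_left _ _ (Classical.decEq _) _ _
  have hG2 : G ∣ X ^ n - 1 := hG ▸ @EuclideanDomain.gcd_dvd_right _ _ (Classical.decEq _) _ _
  have hG3 {c : Polynomial FQ} (h1 : c ∣ g) (h2 : c ∣ X ^ n - 1) : c ∣ G :=
    hG ▸ @EuclideanDomain.dvd_gcd _ _ (Classical.decEq _) _ _ _ h1 h2
  have hG0 : G ≠ 0 := ne_zero_of_dvd_ne_zero hP hG2
  set M := normalize G with hM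
  have hMmonic : M.Monic := monic_normalize hG0
  have hM1 : M ∣ g := normalize_dvd_iff.mpr hG1
  have hM2 : M ∣ X ^ n - 1 := normalize_dvd_iff.mpr hG2
  have hM3 {c : Polynomial FQ} (h1 : c ∣ g) (h2 : c ∣ X ^ n - 1) : c ∣ M :=
    dvd_normalize_iff.mpr (hG3 h1 h2)
  have hMdeg : M.natDegree = G.natDegree :=
    natDegree_eq_of_degree_eq (degree_normalize)
  -- Frobenius invariance of the monic gcd
  set F : FQ →+* FQ := (FiniteField.frobeniusAlgHom Fq FQ : FQ →+* FQ) with hF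
  have hshift : X * g = g.map F + C α * (X ^ n - 1) := by
    rw [hg, map_frob_gpoly]
    exact gpoly_shift _ _ _ (by rw [← hQ, FiniteField.pow_card])
  have hFP : M.map F ∣ X ^ n - 1 := by
    simpa using Polynomial.map_dvd F hM2
  have hFg : M.map F ∣ g := by
    have h1 : M.map F ∣ X * g := by
      rw [hshift]
      exact dvd_add (Polynomial.map_dvd F hM1) (hFP.mul_left _)
    -- `X` is inverted by `X^(n-1)` modulo `Xⁿ - 1`.
    have h2 : g = X ^ (n - 1) * (X * g) - (X ^ n - 1) * g := by
      obtain ⟨k, rfl⟩ := Nat.exists_eq_succ_of_ne_zero hn.ne'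
      simp only [Nat.succ_eq_add_one, Nat.add_sub_cancel]
      ring
    rw [h2]
    exact dvd_sub (h1.mul_left _) (hFP.mul_right _)
  have hFM : M.map F = M :=
    (eq_of_monic_of_dvd_of_natDegree_le (hMmonic.map F) hMmonic (hM3 hFg hFP)
      (natDegree_map F).ge).symm
  have hlift : M ∈ lifts (algebraMap Fq FQ) := by
    refine (lifts_iff_coeff_lifts _).mpr fun k => mem_range_of_pow_card_eq ?_
    conv_rhs => rw [← hFM, coeff_map]
    rfl
  obtain ⟨D, hDM, hDdeg, hDmonic⟩ := lifts_and_natDegree_eq_and_monic hlift hMmonic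
  have hDP : D ∣ X ^ n - 1 := by
    rw [← map_dvd_map' (algebraMap Fq FQ), hDM]
    simpa using hM2
  obtain ⟨E, hE⟩ := hDP
  refine ⟨D, E, hDmonic, hE.symm, ?_, ?_⟩
  · intro k
    rw [hDdeg, hMdeg, hG]
    rfl
  · intro f
    rw [action_eq_zero_iff n hn hQ, ← map_dvd_map' (algebraMap Fq FQ)]
    have hPE : (X ^ n - 1 : Polynomial FQ) = M * E.map (algebraMap Fq FQ) := by
      rw [← hDM, ← Polynomial.map_mul, ← hE]
      simp
    constructor
    · intro h
      -- Bézout: `M` is a combination of `g` and `Xⁿ - 1`, so `Xⁿ - 1 = M E` divides `f M`.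
      have hbez : (X ^ n - 1 : Polynomial FQ) ∣ f.map (algebraMap Fq FQ) * G := by
        rw [hG, @EuclideanDomain.gcd_eq_gcd_ab _ _ (Classical.decEq _), mul_add]
        refine dvd_add ?_ ?_
        · rw [← mul_assoc]
          exact h.mul_right _
        · exact (Dvd.intro _ rfl : (X ^ n - 1 : Polynomial FQ) ∣ _).mul_left _
      have h2 : (X ^ n - 1 : Polynomial FQ) ∣ M * f.map (algebraMap Fq FQ) := by
        rw [mul_comm]
        exact hbez.trans (mul_dvd_mul_left _ (dvd_normalize_iff.mpr dvd_rfl))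
      rw [hPE] at h2
      exact (mul_dvd_mul_iff_left hMmonic.ne_zero).mp h2
    · intro h
      rw [hPE, mul_comm]
      exact mul_dvd_mul h hM1

end Action

/-! ### Linear independence of conjugates and the criterion -/

/-- The first `d` conjugates of `α` are independent iff no nonzero `f ∈ F_q[X]` of degree `< d`
satisfies `f(φ)α = 0`. -/
theorem linearIndependent_conj_iff {Fq FQ : Type*} [Field Fq] [Fintype Fq] [Field FQ] [Fintype FQ]
    [Algebra Fq FQ] (d : ℕ) (α : FQ) :
    LinearIndependent Fq (fun i : Fin d => α ^ Fintype.card Fq ^ (i : ℕ)) ↔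
      ∀ f : Polynomial Fq, f.degree < d → frobAct f α = 0 → f = 0 := by
  rw [Fintype.linearIndependent_iff]
  constructor
  · intro h f hf h0
    have hsum : f = ∑ i : Fin d, C (f.coeff i) * X ^ (i : ℕ) := by
      by_cases hz : f = 0
      · simp [hz]
      · rw [Fin.sum_univ_eq_sum_range (fun i => C (f.coeff i) * X ^ i)]
        exact f.as_sum_range_C_mul_X_pow' ((natDegree_lt_iff_degree_lt hz).mpr hf)
    rw [hsum, frobAct_sum] at h0
    simp only [frobAct_C_mul_X_pow] at h0
    have := h (fun i => f.coeff i) h0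
    rw [hsum]
    simp [this]
  · intro h a ha i
    have h1 := h (∑ i : Fin d, C (a i) * X ^ (i : ℕ)) ?_ ?_
    · have h2 := congrArg (fun f => coeff f i) h1
      simpa [finsetSum_coeff, coeff_X_pow, Fin.val_inj] using h2
    · refine (degree_sum_le _ _).trans_lt ((Finset.sup_lt_iff (WithBot.bot_lt_coe d)).mpr ?_)
      intro j _
      refine (degree_C_mul_X_pow_le _ _).trans_lt ?_
      exact Nat.cast_lt.mpr j.2
    · rw [frobAct_sum]
      simpa only [frobAct_C_mul_X_pow] using ha

theorem stmt_10 (p m n q : ℕ) (hp : p.Prime) (hm : 0 < m) (hq : q = p ^ m) (hn : 0 < n)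
    {Fq FQ : Type*} [Field Fq] [Fintype Fq] [Field FQ] [Fintype FQ] [Algebra Fq FQ]
    (hcard : Fintype.card Fq = q) (hcardQ : Fintype.card FQ = q ^ n)
    (hgcd : Nat.gcd n (q * (q - 1)) = 1)
    (α : FQ) (hα : α ≠ 0) :
    IsKNormal q n 1 α ↔
      (∑ i ∈ Finset.range n, α ^ q ^ i = 0 ∧
        LinearIndependent Fq (fun i : Fin (n - 1) => α ^ q ^ (i : ℕ))) := by
  clear hq
  subst hcard
  obtain ⟨D, E, hDm, hDE, hk, hE⟩ := exists_factorization n hn hcardQ α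
  rw [hk, linearIndependent_conj_iff, ← frobAct_geom, hE]
  have hP : (X ^ n - 1 : Polynomial Fq).natDegree = n := by
    rw [← C_1, natDegree_X_pow_sub_C]
  have hP0 : (X ^ n - 1 : Polynomial Fq) ≠ 0 := (monic_X_pow_sub_C 1 hn.ne').ne_zero
  have hE0 : E ≠ 0 := right_ne_zero_of_mul (hDE ▸ hP0)
  have hdeg : D.natDegree + E.natDegree = n := by
    rw [← natDegree_mul hDm.ne_zero hE0, hDE, hP]
  have hgeom : (X - 1) * (∑ i ∈ Finset.range n, X ^ i : Polynomial Fq) = X ^ n - 1 :=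
    mul_geom_sum X n
  have hX1 : (X - 1 : Polynomial Fq) ≠ 0 := X_sub_C_ne_zero (1 : Fq)
  constructor
  · intro hD1
    -- `D = X - c` with `c ∈ F_q` an `n`-th root of unity, which forces `c = 1`.
    obtain ⟨c, hc⟩ : ∃ c : Fq, D = X - C c :=
      ⟨-D.coeff 0, by rw [C_neg, sub_neg_eq_add]; exact hDm.eq_X_add_C hD1⟩
    have hcn : c ^ n = 1 := by
      have h := congrArg (eval c) hDE
      rw [hc] at h
      simp only [eval_mul, eval_sub, eval_X, eval_C, sub_self, zero_mul, eval_pow, eval_one] at h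
      exact (sub_eq_zero.mp h.symm)
    have hc0 : c ≠ 0 := by
      rintro rfl
      rw [zero_pow hn.ne'] at hcn
      exact zero_ne_one hcn
    have hc1 : c = 1 := by
      have hcop : Nat.gcd n (Fintype.card Fq - 1) = 1 :=
        Nat.Coprime.coprime_mul_left_right hgcd
      have h := pow_gcd_eq_one.mpr ⟨hcn, FiniteField.pow_card_sub_one_eq_one c hc0⟩
      rwa [hcop, pow_one] at h
    have hEg : E = ∑ i ∈ Finset.range n, X ^ i := by
      rw [← hgeom, hc, hc1, C_1] at hDE
      exact mul_left_cancel₀ hX1 hDE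
    refine ⟨hEg ▸ dvd_rfl, fun f hf h0 => ?_⟩
    refine eq_zero_of_dvd_of_degree_lt ((hE f).mp h0) (hf.trans_le ?_)
    rw [degree_eq_natDegree hE0]
    exact_mod_cast (by omega : n - 1 ≤ E.natDegree)
  · rintro ⟨htr, hli⟩
    have hS0 : (∑ i ∈ Finset.range n, X ^ i : Polynomial Fq) ≠ 0 :=
      right_ne_zero_of_mul (hgeom ▸ hP0)
    have hSdeg : 1 + (∑ i ∈ Finset.range n, X ^ i : Polynomial Fq).natDegree = n := by
      rw [← hgeom, natDegree_mul hX1 hS0, ← C_1, natDegree_X_sub_C] at hP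
      exact hP
    have hle := natDegree_le_of_dvd htr hS0
    have hge : n - 1 ≤ E.natDegree := by
      by_contra! hlt
      refine hE0 (hli E ?_ ((hE E).mpr dvd_rfl))
      rw [degree_eq_natDegree hE0]
      exact_mod_cast hlt
    omega
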